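/- arXiv:1606.08621 — 3 statements merged into one kernel-verified Lean document; each statement's English description precedes it below -/
import Mathlib

section
/- Let G be a graph with X the projective toric subset it parameterizes, let H be a subgraph of G with no isolated vertices, and let Y be the projective toric subset parameterized by H. Under the inclusion of polynomial rings K[E_H] ⊆ K[E_G] induced by E_H ⊆ E_G, the vanishing ideal of Y satisfies I(Y) = I(X) ∩ K[E_H]. -/
open MvPolynomial

/-- A finite multigraph without loops: each edge `e` has two distinct endpoints
`fst e` and `snd e`.  Multiple edges with the same endpoints are allowed. -/
structure Multigraph (V E : Type) : Type where
  fst : E → V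
  snd : E → V
  ne : ∀ e, fst e ≠ snd e

namespace Multigraph

variable {V E : Type}

/-- Vertex `v` is an endpoint of the edge `e`. -/
def Incident (G : Multigraph V E) (v : V) (e : E) : Prop :=
  G.fst e = v ∨ G.snd e = v

instance (G : Multigraph V E) [DecidableEq V] (v : V) : DecidablePred (G.Incident v) :=
  fun e => inferInstanceAs (Decidable (G.fst e = v ∨ G.snd e = v))

/-- The degree of a vertex: the number of edges incident to it. -/
noncomputable def degree (G : Multigraph V E) (v : V) : ℕ :=
  Nat.card {e : E // G.Incident v e}

/-- The graph has no isolated vertices. -/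
def NoIsolated (G : Multigraph V E) : Prop :=
  ∀ v : V, ∃ e : E, G.Incident v e

variable (K : Type) [Field K] [Fintype K]

/-- The point of the affine torus associated with an assignment `x` of nonzero
scalars to the vertices: its coordinate at an edge `e = {v,w}` is `x v * x w`. -/
def point (G : Multigraph V E) (x : V → Kˣ) : E → K :=
  fun e => (x (G.fst e) : K) * (x (G.snd e) : K)

/-- The projective toric subset `X` parameterized by `G`, realized as the set of
`Kˣ`-orbits (i.e. projective points) of the points `G.point K x`, `x : V → Kˣ`. -/
def toricSet (G : Multigraph V E) : Set (Set (E → K)) :=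
  Set.range fun x : V → Kˣ => MulAction.orbit Kˣ (G.point K x)

/-- The vanishing ideal `I(X)` of the projective toric subset parameterized by `G`:
the ideal of all polynomials each of whose homogeneous components vanishes at the
point `G.point K x` for every `x : V → Kˣ`. -/
def vanishingIdeal (G : Multigraph V E) : Ideal (MvPolynomial E K) where
  carrier := {f | ∀ (x : V → Kˣ) (d : ℕ), eval (G.point K x) (homogeneousComponent d f) = 0}
  zero_mem' := by intro x d; simp
  add_mem' := by
    intro a b ha hb x d
    rw [map_add, map_add, ha x d, hb x d, add_zero]
  smul_mem' := by
    intro c f hf x n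
    rw [smul_eq_mul, ← sum_homogeneousComponent f, Finset.mul_sum, map_sum, map_sum]
    refine Finset.sum_eq_zero fun d _ => ?_
    nth_rewrite 1 [← sum_homogeneousComponent c]
    rw [Finset.sum_mul, map_sum, map_sum]
    refine Finset.sum_eq_zero fun e _ => ?_
    have h1 : (homogeneousComponent e c * homogeneousComponent d f).IsHomogeneous (e + d) :=
      (homogeneousComponent_isHomogeneous e c).mul (homogeneousComponent_isHomogeneous d f)
    rw [homogeneousComponent_of_mem ((mem_homogeneousSubmodule _ _).mpr h1)]
    split_ifs
    · rw [map_mul, hf x d, mul_zero]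
    · simp

/-- The Hilbert function of `S/I(X)`: the dimension over `K` of the degree-`d`
homogeneous component of the quotient, realized as the image of the space of
degree-`d` homogeneous polynomials in the quotient. -/
noncomputable def hilbert (G : Multigraph V E) (d : ℕ) : ℕ :=
  Module.finrank K
    ((homogeneousSubmodule E K d).map (Ideal.Quotient.mkₐ K (G.vanishingIdeal K)).toLinearMap)

/-- The regularity `reg G`: the least `d` such that the Hilbert function of `S/I(X)`
at `d` equals the number of points of `X`. -/
noncomputable def reg (G : Multigraph V E) : ℕ :=
  sInf {d : ℕ | G.hilbert K d = (G.toricSet K).ncard}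

/-- The graph obtained from `G` by deleting a vertex `v` and all edges incident
to it. -/
def deleteVert (G : Multigraph V E) (v : V) :
    Multigraph {w : V // w ≠ v} {e : E // ¬ G.Incident v e} where
  fst e := ⟨G.fst e.1, fun h => e.2 (Or.inl h)⟩
  snd e := ⟨G.snd e.1, fun h => e.2 (Or.inr h)⟩
  ne e h := G.ne e.1 (congrArg Subtype.val h)

/-- The graph obtained from `G` by identifying the vertex `v₂` with the vertex `v₁`:
the edges are the same, and every endpoint equal to `v₂` is replaced by `v₁`.
This requires that `{v₁, v₂}` is a non-edge of `G`, so that no loops are created. -/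
def identifyVert [DecidableEq V] (G : Multigraph V E) (v₁ v₂ : V) (h12 : v₁ ≠ v₂)
    (h : ∀ e, ¬ (G.Incident v₁ e ∧ G.Incident v₂ e)) :
    Multigraph {w : V // w ≠ v₂} E where
  fst e := ⟨if G.fst e = v₂ then v₁ else G.fst e, by split_ifs with hh; exacts [h12, hh]⟩
  snd e := ⟨if G.snd e = v₂ then v₁ else G.snd e, by split_ifs with hh; exacts [h12, hh]⟩
  ne := by
    intro e heq
    rw [Subtype.ext_iff] at heq
    simp only at heq
    split_ifs at heq with h1 h2 h2
    · exact G.ne e (h1.trans h2.symm)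
    · exact h e ⟨Or.inr heq.symm, Or.inl h1⟩
    · exact h e ⟨Or.inl heq, Or.inr h2⟩
    · exact G.ne e heq

/-- The subgraph of `G` determined by a set `A` of edges of `G`, together with all
endpoints of those edges (so it has no isolated vertices). -/
def subgraph [DecidableEq V] (G : Multigraph V E) (A : Finset E) :
    Multigraph {v : V // ∃ e ∈ A, G.Incident v e} {e : E // e ∈ A} where
  fst e := ⟨G.fst e.1, e.1, e.2, Or.inl rfl⟩
  snd e := ⟨G.snd e.1, e.1, e.2, Or.inr rfl⟩
  ne e h := G.ne e.1 (congrArg Subtype.val h)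

end Multigraph

/-- The vertex of the parallel composition of paths of lengths `k i` lying on the
`i`-th path at distance `j` from the common initial vertex:  `j = 0` gives the common
initial vertex, `j = k i` the common terminal vertex, and `0 < j < k i` gives the
`j`-th interior vertex of the `i`-th path. -/
def pcVert {ι : Type} (k : ι → ℕ) (i : ι) (j : ℕ) :
    Bool ⊕ ((i : ι) × Fin (k i - 1)) :=
  if h0 : j = 0 then Sum.inl false
  else if h : j < k i then Sum.inr ⟨i, ⟨j - 1, by omega⟩⟩
  else Sum.inl true

/-- The parallel composition of the family of paths `P i` of lengths `k i` (`i : ι`):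
the `i`-th path has `k i` edges indexed by `Fin (k i)`, its `j`-th edge joining the
vertices of the `i`-th path at distances `j` and `j + 1` from the common initial
vertex.  All the initial vertices of the paths are identified to a single vertex and
all the terminal vertices are identified to a single vertex. -/
def parallelComp {ι : Type} (k : ι → ℕ) :
    Multigraph (Bool ⊕ ((i : ι) × Fin (k i - 1))) ((i : ι) × Fin (k i)) where
  fst e := pcVert k e.1 e.2.1
  snd e := pcVert k e.1 (e.2.1 + 1)
  ne := by
    rintro ⟨i, j⟩ h
    have hj := j.2
    simp only [pcVert] at h
    split_ifs at h <;> simp_all <;> omega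

/-- The monomial `f i`: the product of the edges of the `i`-th path of the parallel
composition in odd positions (positions `1, 3, 5, ...`, i.e. indices `0, 2, 4, ...`). -/
noncomputable def oddProd {ι : Type} (K : Type) [Field K] (k : ι → ℕ) (i : ι) :
    MvPolynomial ((i : ι) × Fin (k i)) K :=
  ∏ m : Fin ((k i + 1) / 2), X ⟨i, ⟨2 * m.1, by have := m.2; omega⟩⟩

/-- The monomial `g i`: the product of the edges of the `i`-th path of the parallel
composition in even positions (positions `2, 4, 6, ...`, i.e. indices `1, 3, 5, ...`). -/
noncomputable def evenProd {ι : Type} (K : Type) [Field K] (k : ι → ℕ) (i : ι) :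
    MvPolynomial ((i : ι) × Fin (k i)) K :=
  ∏ m : Fin (k i / 2), X ⟨i, ⟨2 * m.1 + 1, by have := m.2; omega⟩⟩

/-!
An edge polynomial of `H`, viewed as one of `G`, is evaluated at a weighting of the vertices of `G`
through the restriction of that weighting to the vertices of `H`. Every weighting of the vertices
of `H` arises as such a restriction, so the two ideals are defined by the same conditions.
-/

namespace Multigraph

variable {V W E F : Type}

/-- The maps `ψ` on vertices and `φ` on edges form a homomorphism of multigraphs from `H` to `G`:
the endpoints of `φ e` are the images under `ψ` of the endpoints of `e`. Endpoints are compared as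
unordered pairs, since the choice of `fst` and `snd` carries no meaning. -/
def IsHom (H : Multigraph W F) (G : Multigraph V E) (ψ : W → V) (φ : F → E) : Prop :=
  ∀ e, s(G.fst (φ e), G.snd (φ e)) = s(ψ (H.fst e), ψ (H.snd e))

theorem isHom_subgraph [DecidableEq V] (G : Multigraph V E) (A : Finset E) :
    (G.subgraph A).IsHom G Subtype.val Subtype.val :=
  fun _ => rfl

variable {K : Type} [Field K] {G : Multigraph V E} {H : Multigraph W F}
  {ψ : W → V} {φ : F → E}

theorem IsHom.point_comp (h : H.IsHom G ψ φ) (x : V → Kˣ) :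
    G.point K x ∘ φ = H.point K (x ∘ ψ) := by
  funext e
  rcases Sym2.eq_iff.mp (h e) with ⟨hfst, hsnd⟩ | ⟨hfst, hsnd⟩
  · simp only [Function.comp_apply, point, hfst, hsnd]
  · simp only [Function.comp_apply, point, hfst, hsnd, mul_comm]

theorem mem_vanishingIdeal {f : MvPolynomial E K} :
    f ∈ G.vanishingIdeal K ↔
      ∀ (x : V → Kˣ) (d : ℕ), eval (G.point K x) (homogeneousComponent d f) = 0 :=
  Iff.rfl

theorem IsHom.rename_mem_vanishingIdeal (h : H.IsHom G ψ φ) {f : MvPolynomial F K} :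
    rename φ f ∈ G.vanishingIdeal K ↔
      ∀ (x : V → Kˣ) (d : ℕ), eval (H.point K (x ∘ ψ)) (homogeneousComponent d f) = 0 := by
  simp only [mem_vanishingIdeal, ← rename_homogeneousComponent, eval_rename, h.point_comp]

end Multigraph

theorem vanishingIdeal_subgraph_eq_comap_general {V W E F : Type}
    (K : Type) [Field K] {G : Multigraph V E} {H : Multigraph W F}
    {ψ : W → V} {φ : F → E} (h : H.IsHom G ψ φ) (hψ : Function.Injective ψ) :
    H.vanishingIdeal K = Ideal.comap (rename φ) (G.vanishingIdeal K) := by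
  ext f
  have restrict_surjective : Function.Surjective fun x : V → Kˣ => x ∘ ψ :=
    hψ.surjective_comp_right
  rw [Ideal.mem_comap, h.rename_mem_vanishingIdeal, Multigraph.mem_vanishingIdeal]
  exact restrict_surjective.forall

/-- **Section 2.**  If `H` is the subgraph of `G` determined by a set `A` of edges,
and `Y` is the projective toric subset parameterized by `H`, then
`I(Y) = I(X) ∩ K[E_H]`:  a polynomial of `K[E_H]` lies in `I(Y)` exactly when, viewed
in `K[E_G]`, it lies in `I(X)`. -/
theorem vanishingIdeal_subgraph_eq_comap
    {V E : Type} [Fintype V] [DecidableEq V] [Fintype E] [DecidableEq E]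
    (K : Type) [Field K] [Fintype K]
    (G : Multigraph V E) (hG : G.NoIsolated) (A : Finset E) :
    (G.subgraph A).vanishingIdeal K =
      Ideal.comap (rename (Subtype.val : {e : E // e ∈ A} → E))
        (G.vanishingIdeal K) := by
  exact vanishingIdeal_subgraph_eq_comap_general K (G.isHom_subgraph A) Subtype.val_injective
end

section
/- Let G be the parallel composition of two paths, one of odd length k_1 and one of even length k_2, and let X be the projective toric subset parameterized by G. Then reg(G) = (k_1 + k_2 − 1)(q−2). -/
open MvPolynomial

/-!
The two paths close up to an odd cycle, and prescribing the products `x_v x_w` along the edges of an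
odd cycle is always possible up to a common scalar: following a path multiplies the label of its end
vertex by the scalar exactly when the length is odd, so the scalar can be tuned to make the two
paths agree at the terminal vertex. Hence `X` is the whole projective torus. Normalizing one
coordinate to `1`, its points are `y ∈ (K^*)^{s-1}`, and `HF(d) = |X|` says that every function of
`y` is the restriction of a form of degree `d`. For `d ≥ (s-1)(q-2)` the indicator functions are
products of linear forms. For `d < (s-1)(q-2)` every monomial has exponent less than `q - 2` at some
normalized coordinate, hence is annihilated by `φ ↦ ∑ y, (∏ e, y e) φ(y)`, and so is every form of
degree `d`; but this functional is not zero.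
-/

theorem finrank_map_eq_finrank_map_of_eq_zero_iff {R M N P : Type*} [Ring R]
    [AddCommGroup M] [Module R M] [AddCommGroup N] [Module R N] [AddCommGroup P] [Module R P]
    {p : Submodule R M} {f : M →ₗ[R] N} {g : M →ₗ[R] P} (h : ∀ x ∈ p, f x = 0 ↔ g x = 0) :
    Module.finrank R (p.map f) = Module.finrank R (p.map g) := by
  have hker : LinearMap.ker (f.domRestrict p) = LinearMap.ker (g.domRestrict p) := by
    ext x
    simpa using h x.1 x.2
  rw [← LinearMap.range_domRestrict, ← LinearMap.range_domRestrict]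
  exact LinearEquiv.finrank_eq ((f.domRestrict p).quotKerEquivRange.symm.trans
    ((Submodule.quotEquivOfEq _ _ hker).trans (g.domRestrict p).quotKerEquivRange))

theorem eval_smul_of_isHomogeneous {σ R : Type*} [CommSemiring R] {f : MvPolynomial σ R} {d : ℕ}
    (hf : f.IsHomogeneous d) (c : R) (p : σ → R) : eval (c • p) f = c ^ d * eval p f := by
  rw [eval_eq, eval_eq, Finset.mul_sum]
  refine Finset.sum_congr rfl fun m hm => ?_
  simp only [Pi.smul_apply, smul_eq_mul, mul_pow, Finset.prod_mul_distrib,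
    Finset.prod_pow_eq_pow_sum, ← hf.degree_eq_sum_deg_support hm]
  ring

theorem exists_ne_apply_lt_of_degree_lt {E : Type*} [Fintype E] (e₀ : E) {m : E →₀ ℕ}
    {n : ℕ} (hm : m.degree < (Fintype.card E - 1) * n) : ∃ e : {e // e ≠ e₀}, m e < n := by
  classical
  by_contra! hge
  have hsum : ∑ e : {e // e ≠ e₀}, m e ≤ m.degree := by
    rw [Finsupp.degree_eq_sum, Fintype.sum_eq_add_sum_subtype_ne _ e₀]
    exact Nat.le_add_left _ _
  have hcard : ∑ _e : {e // e ≠ e₀}, n = (Fintype.card E - 1) * n := by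
    simp
  have := Finset.sum_le_sum fun e (_ : e ∈ Finset.univ) => hge e
  omega

section NormalizedPoint

variable {E K : Type*} [DecidableEq E]

/-- The representative with coordinate `1` at `e₀` of a point of the projective torus; `y` lists
its remaining coordinates. -/
def normalizedPoint [Monoid K] (e₀ : E) (y : {e // e ≠ e₀} → Kˣ) : E → K :=
  fun e => if h : e = e₀ then 1 else y ⟨e, h⟩

@[simp]
theorem normalizedPoint_self [Monoid K] (e₀ : E) (y : {e // e ≠ e₀} → Kˣ) :
    normalizedPoint e₀ y e₀ = 1 :=
  dif_pos rfl

@[simp]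
theorem normalizedPoint_coe [Monoid K] {e₀ : E} (y : {e // e ≠ e₀} → Kˣ) (e : {e // e ≠ e₀}) :
    normalizedPoint e₀ y e = y e :=
  dif_neg e.2

theorem exists_eq_smul_normalizedPoint [Monoid K] (e₀ : E) (t : E → Kˣ) :
    ∃ (c : Kˣ) (y : {e // e ≠ e₀} → Kˣ), (fun e => (t e : K)) = c • normalizedPoint e₀ y := by
  refine ⟨t e₀, fun e => (t e₀)⁻¹ * t e, funext fun e => ?_⟩
  by_cases h : e = e₀
  · simp [h, Units.smul_def]
  · simp [normalizedPoint, h, Units.smul_def]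

theorem injective_orbit_normalizedPoint [Monoid K] (e₀ : E) :
    Function.Injective fun y : {e // e ≠ e₀} → Kˣ =>
      MulAction.orbit Kˣ (normalizedPoint e₀ y : E → K) := by
  intro y z hyz
  obtain ⟨c, hc⟩ := MulAction.orbit_eq_iff.1 hyz
  have hc_one : (c : K) = 1 := by
    simpa [Units.smul_def] using congrFun hc e₀
  ext e
  simpa [Units.smul_def, hc_one] using (congrFun hc e).symm

/-- Restriction of polynomials to the projective torus, through the normalized representatives of
its points. -/
noncomputable def torusEval (K : Type*) [CommSemiring K] (e₀ : E) :
    MvPolynomial E K →ₗ[K] (({e // e ≠ e₀} → Kˣ) → K) :=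
  LinearMap.pi fun y => (aeval (normalizedPoint e₀ y)).toLinearMap

@[simp]
theorem torusEval_apply [CommSemiring K] (e₀ : E) (f : MvPolynomial E K)
    (y : {e // e ≠ e₀} → Kˣ) : torusEval K e₀ f y = eval (normalizedPoint e₀ y) f := by
  simp [torusEval, aeval_eq_eval]

theorem prod_mul_eval_monomial_normalizedPoint [Fintype E] [CommSemiring K] {e₀ : E}
    (m : E →₀ ℕ) (y : {e // e ≠ e₀} → Kˣ) :
    (∏ e, (y e : K)) * eval (normalizedPoint e₀ y) (monomial m 1) =
      ∏ e, (y e : K) ^ (m e + 1) := by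
  have heval : eval (normalizedPoint e₀ y) (monomial m 1) = ∏ e, (y e : K) ^ m e := by
    rw [eval_monomial, one_mul, Finsupp.prod_fintype _ _ fun _ => pow_zero _,
      Fintype.prod_eq_mul_prod_subtype_ne _ e₀]
    simp
  rw [heval, ← Finset.prod_mul_distrib]
  simp only [pow_succ']

end NormalizedPoint

section Interpolation

variable {E K : Type*} [Fintype E] [DecidableEq E] [Field K] [Fintype K]

/-- A product of linear forms that is non-zero on the projective torus only at the point with
normalized coordinates `a`; a scalar multiple of it interpolates the indicator function of `a`. -/
noncomputable def torusIndicator [DecidableEq K] (e₀ : E) (a : {e // e ≠ e₀} → Kˣ) :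
    MvPolynomial E K :=
  ∏ e : {e // e ≠ e₀}, ∏ c ∈ Finset.univ.erase (a e), (X e.1 - C (c : K) * X e₀)

theorem isHomogeneous_torusIndicator [DecidableEq K] (e₀ : E) (a : {e // e ≠ e₀} → Kˣ) :
    (torusIndicator e₀ a).IsHomogeneous ((Fintype.card E - 1) * (Fintype.card K - 2)) := by
  have hcard (e : {e // e ≠ e₀}) : (Finset.univ.erase (a e)).card = Fintype.card K - 2 := by
    rw [Finset.card_erase_of_mem (Finset.mem_univ _), Finset.card_univ, Fintype.card_units,
      Nat.sub_sub]
  have hprod := IsHomogeneous.prod Finset.univ _ _ fun (e : {e // e ≠ e₀}) _ =>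
    IsHomogeneous.prod (Finset.univ.erase (a e)) _ (fun _ => 1) fun c _ =>
      (isHomogeneous_X K e.1).sub (isHomogeneous_C_mul_X (c : K) e₀)
  simpa [hcard, torusIndicator] using hprod

theorem eval_torusIndicator [DecidableEq K] {e₀ : E} (a y : {e // e ≠ e₀} → Kˣ) :
    eval (normalizedPoint e₀ y) (torusIndicator e₀ a) =
      ∏ e, ∏ c ∈ Finset.univ.erase (a e), ((y e : K) - c) := by
  simp [torusIndicator, map_prod]

theorem eval_torusIndicator_self_ne_zero [DecidableEq K] {e₀ : E} (a : {e // e ≠ e₀} → Kˣ) :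
    eval (normalizedPoint e₀ a) (torusIndicator e₀ a) ≠ 0 := by
  rw [eval_torusIndicator]
  refine Finset.prod_ne_zero_iff.2 fun e _ => Finset.prod_ne_zero_iff.2 fun c hc => ?_
  exact sub_ne_zero.2 fun h => Finset.ne_of_mem_erase hc (Units.ext h.symm)

theorem eval_torusIndicator_of_ne [DecidableEq K] {e₀ : E} {a y : {e // e ≠ e₀} → Kˣ}
    (hy : y ≠ a) : eval (normalizedPoint e₀ y) (torusIndicator e₀ a) = 0 := by
  obtain ⟨e, he⟩ := Function.ne_iff.1 hy
  rw [eval_torusIndicator]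
  exact Finset.prod_eq_zero (Finset.mem_univ e)
    (Finset.prod_eq_zero (Finset.mem_erase_of_ne_of_mem he (Finset.mem_univ _)) (sub_self _))

theorem map_torusEval_homogeneousSubmodule_eq_top (e₀ : E) {d : ℕ}
    (hd : (Fintype.card E - 1) * (Fintype.card K - 2) ≤ d) :
    (homogeneousSubmodule E K d).map (torusEval K e₀) = ⊤ := by
  classical
  rw [eq_top_iff, ← (Pi.basisFun K _).span_eq, Submodule.span_le]
  rintro _ ⟨a, rfl⟩
  let u : K := eval (normalizedPoint e₀ a) (torusIndicator e₀ a)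
  -- `X e₀` takes the value `1` on normalized points, so its powers only adjust the degree.
  let F : MvPolynomial E K :=
    torusIndicator e₀ a * X e₀ ^ (d - (Fintype.card E - 1) * (Fintype.card K - 2))
  have hF : F.IsHomogeneous d := by
    have hmul := (isHomogeneous_torusIndicator e₀ a).mul
      (isHomogeneous_X_pow (R := K) e₀ (d - (Fintype.card E - 1) * (Fintype.card K - 2)))
    rwa [Nat.add_sub_cancel' hd] at hmul
  refine ⟨u⁻¹ • F, Submodule.smul_mem _ _ hF, funext fun y => ?_⟩
  by_cases hy : y = a
  · simp [F, u, hy, eval_torusIndicator_self_ne_zero]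
  · simp [F, hy, eval_torusIndicator_of_ne hy]

theorem sum_prod_units_pow_eq_zero [DecidableEq K] {ι : Type*} [Fintype ι] [DecidableEq ι]
    {m : ι → ℕ} {i : ι} (hi : ¬ Fintype.card K - 1 ∣ m i) :
    ∑ y : ι → Kˣ, ∏ j, (y j : K) ^ m j = 0 := by
  rw [← Fintype.prod_sum fun j (c : Kˣ) => (c : K) ^ m j]
  exact Finset.prod_eq_zero (Finset.mem_univ i)
    ((FiniteField.sum_pow_units K (m i)).trans (if_neg hi))

theorem sum_prod_mul_eval_eq_zero_of_isHomogeneous [DecidableEq K] (e₀ : E) {d : ℕ}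
    {f : MvPolynomial E K} (hf : f.IsHomogeneous d)
    (hd : d < (Fintype.card E - 1) * (Fintype.card K - 2)) :
    ∑ y : {e // e ≠ e₀} → Kˣ, (∏ e, (y e : K)) * eval (normalizedPoint e₀ y) f = 0 := by
  have hmonomial (m : E →₀ ℕ) (hm : m.degree = d) : ∑ y : {e // e ≠ e₀} → Kˣ,
      (∏ e, (y e : K)) * eval (normalizedPoint e₀ y) (monomial m 1) = 0 := by
    obtain ⟨e, he⟩ := exists_ne_apply_lt_of_degree_lt e₀ (hm.trans_lt hd)
    simp only [prod_mul_eval_monomial_normalizedPoint]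
    refine sum_prod_units_pow_eq_zero (i := e) fun hdvd => ?_
    have := Nat.le_of_dvd (Nat.succ_pos _) hdvd
    omega
  have hsum (y : {e // e ≠ e₀} → Kˣ) : (∏ e, (y e : K)) * eval (normalizedPoint e₀ y) f =
      ∑ m ∈ f.support, coeff m f *
        ((∏ e, (y e : K)) * eval (normalizedPoint e₀ y) (monomial m 1)) := by
    conv_lhs => rw [f.as_sum, map_sum, Finset.mul_sum]
    refine Finset.sum_congr rfl fun m _ => ?_
    rw [eval_monomial, eval_monomial]
    ring
  simp only [hsum]
  rw [Finset.sum_comm]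
  refine Finset.sum_eq_zero fun m hm => ?_
  rw [← Finset.mul_sum, hmonomial m (hf.degree_eq_sum_deg_support hm).symm, mul_zero]

theorem map_torusEval_homogeneousSubmodule_ne_top (e₀ : E) {d : ℕ}
    (hd : d < (Fintype.card E - 1) * (Fintype.card K - 2)) :
    (homogeneousSubmodule E K d).map (torusEval K e₀) ≠ ⊤ := by
  classical
  intro htop
  obtain ⟨f, hf, hf_single⟩ :
      (Pi.single 1 1 : ({e // e ≠ e₀} → Kˣ) → K) ∈
        (homogeneousSubmodule E K d).map (torusEval K e₀) := htop ▸ Submodule.mem_top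
  have hsum := sum_prod_mul_eval_eq_zero_of_isHomogeneous e₀ hf hd
  simp only [← torusEval_apply, hf_single] at hsum
  simp [Pi.single_apply] at hsum

theorem map_torusEval_homogeneousSubmodule_eq_top_iff (e₀ : E) (d : ℕ) :
    (homogeneousSubmodule E K d).map (torusEval K e₀) = ⊤ ↔
      (Fintype.card E - 1) * (Fintype.card K - 2) ≤ d :=
  ⟨fun htop => not_lt.1 fun hlt => map_torusEval_homogeneousSubmodule_ne_top e₀ hlt htop,
    map_torusEval_homogeneousSubmodule_eq_top e₀⟩

end Interpolation

namespace Multigraph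

variable {V E : Type} {G : Multigraph V E}

/-- Every `A`-labelling of the edges is, up to a common factor, the labelling by products of the
labels of the endpoints; for `A = K^*` this says that the projective toric subset parameterized by
`G` is the whole projective torus. -/
def ParameterizesTorus (G : Multigraph V E) (A : Type*) [Mul A] : Prop :=
  ∀ t : E → A, ∃ (c : A) (x : V → A), ∀ e, t e = c * (x (G.fst e) * x (G.snd e))

variable {K : Type} [Field K]

theorem mem_vanishingIdeal_iff_of_isHomogeneous {f : MvPolynomial E K} {d : ℕ}
    (hf : f.IsHomogeneous d) :
    f ∈ G.vanishingIdeal K ↔ ∀ x : V → Kˣ, eval (G.point K x) f = 0 := by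
  refine ⟨fun h x => ?_, fun h x n => ?_⟩
  · simpa only [homogeneousComponent_eq_self hf] using h x d
  · rw [homogeneousComponent_of_mem hf]
    split_ifs
    · exact h x
    · exact map_zero _

theorem exists_point_eq_smul_normalizedPoint [DecidableEq E] (G : Multigraph V E) (e₀ : E)
    (x : V → Kˣ) :
    ∃ (c : Kˣ) (y : {e // e ≠ e₀} → Kˣ), G.point K x = c • normalizedPoint e₀ y := by
  simpa only [Units.val_mul] using!
    exists_eq_smul_normalizedPoint (K := K) e₀ fun e => x (G.fst e) * x (G.snd e)

namespace ParameterizesTorus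

theorem exists_normalizedPoint_eq_smul_point [DecidableEq E] (hG : G.ParameterizesTorus Kˣ) (e₀ : E)
    (y : {e // e ≠ e₀} → Kˣ) :
    ∃ (c : Kˣ) (x : V → Kˣ), normalizedPoint e₀ y = c • G.point K x := by
  obtain ⟨c, x, hx⟩ := hG fun e => if h : e = e₀ then 1 else y ⟨e, h⟩
  refine ⟨c, x, funext fun e => ?_⟩
  have he := congrArg Units.val (hx e)
  simpa [normalizedPoint, point, Units.smul_def, apply_dite Units.val] using he

theorem forall_eval_point_eq_zero_iff [DecidableEq E] (hG : G.ParameterizesTorus Kˣ) (e₀ : E)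
    {f : MvPolynomial E K} {d : ℕ} (hf : f.IsHomogeneous d) :
    (∀ x : V → Kˣ, eval (G.point K x) f = 0) ↔ torusEval K e₀ f = 0 := by
  refine ⟨fun h => funext fun y => ?_, fun h x => ?_⟩
  · obtain ⟨c, x, hcx⟩ := hG.exists_normalizedPoint_eq_smul_point e₀ y
    rw [torusEval_apply, hcx, Units.smul_def, eval_smul_of_isHomogeneous hf, h x, mul_zero,
      Pi.zero_apply]
  · obtain ⟨c, y, hcy⟩ := G.exists_point_eq_smul_normalizedPoint e₀ x
    rw [hcy, Units.smul_def, eval_smul_of_isHomogeneous hf, ← torusEval_apply, h, Pi.zero_apply,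
      mul_zero]

theorem hilbert_eq_finrank_map_torusEval [DecidableEq E] (hG : G.ParameterizesTorus Kˣ) (e₀ : E)
    (d : ℕ) :
    G.hilbert K d = Module.finrank K ((homogeneousSubmodule E K d).map (torusEval K e₀)) := by
  refine finrank_map_eq_finrank_map_of_eq_zero_iff fun f hf => ?_
  rw [← hG.forall_eval_point_eq_zero_iff e₀ hf, ← mem_vanishingIdeal_iff_of_isHomogeneous hf]
  exact Ideal.Quotient.eq_zero_iff_mem

theorem toricSet_eq_range_orbit_normalizedPoint [DecidableEq E] (hG : G.ParameterizesTorus Kˣ)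
    (e₀ : E) :
    G.toricSet K = Set.range fun y : {e // e ≠ e₀} → Kˣ =>
      MulAction.orbit Kˣ (normalizedPoint e₀ y : E → K) := by
  refine Set.Subset.antisymm ?_ ?_
  · rintro _ ⟨x, rfl⟩
    obtain ⟨c, y, hcy⟩ := G.exists_point_eq_smul_normalizedPoint e₀ x
    exact ⟨y, (MulAction.orbit_eq_iff.2 ⟨c, hcy.symm⟩).symm⟩
  · rintro _ ⟨y, rfl⟩
    obtain ⟨c, x, hcx⟩ := hG.exists_normalizedPoint_eq_smul_point e₀ y
    exact ⟨x, (MulAction.orbit_eq_iff.2 ⟨c, hcx.symm⟩).symm⟩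

theorem ncard_toricSet (hG : G.ParameterizesTorus Kˣ) (e₀ : E) :
    (G.toricSet K).ncard = Nat.card ({e // e ≠ e₀} → Kˣ) := by
  classical
  rw [hG.toricSet_eq_range_orbit_normalizedPoint e₀, ← Set.image_univ,
    Set.ncard_image_of_injective _ (injective_orbit_normalizedPoint e₀), Set.ncard_univ]

theorem hilbert_eq_ncard_toricSet_iff [DecidableEq E] [Finite E] [Finite K]
    (hG : G.ParameterizesTorus Kˣ) (e₀ : E) (d : ℕ) :
    G.hilbert K d = (G.toricSet K).ncard ↔
      (homogeneousSubmodule E K d).map (torusEval K e₀) = ⊤ := by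
  have := Fintype.ofFinite ({e // e ≠ e₀} → Kˣ)
  rw [hG.hilbert_eq_finrank_map_torusEval e₀, hG.ncard_toricSet e₀, Nat.card_eq_fintype_card,
    ← Module.finrank_fintype_fun_eq_card K]
  exact ⟨Submodule.eq_top_of_finrank_eq, fun htop => by rw [htop, finrank_top]⟩

theorem reg_eq [Fintype E] [Nonempty E] [Fintype K] (hG : G.ParameterizesTorus Kˣ) :
    G.reg K = (Fintype.card E - 1) * (Fintype.card K - 2) := by
  classical
  obtain ⟨e₀⟩ := ‹Nonempty E›
  simp only [reg, hG.hilbert_eq_ncard_toricSet_iff e₀,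
    map_torusEval_homogeneousSubmodule_eq_top_iff e₀]
  exact csInf_Ici

end ParameterizesTorus

end Multigraph

section PathLabel

variable {A : Type*} [CommGroup A]

/-- The vertex labels along a path, starting with `1`, for which the labels of the two endpoints of
the `j`-th edge have product `t j`. -/
def pathLabel (t : ℕ → A) : ℕ → A
  | 0 => 1
  | j + 1 => t j / pathLabel t j

theorem pathLabel_mul_pathLabel_succ (t : ℕ → A) (j : ℕ) :
    pathLabel t j * pathLabel t (j + 1) = t j :=
  mul_div_cancel _ _

theorem pathLabel_const_mul (c : A) (t : ℕ → A) (j : ℕ) :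
    pathLabel (fun n => c * t n) j = c ^ (j % 2) * pathLabel t j := by
  induction j with
  | zero => simp [pathLabel]
  | succ j ih =>
    rw [pathLabel, pathLabel, ih]
    rcases Nat.mod_two_eq_zero_or_one j with hj | hj
    · simp [hj, Nat.succ_mod_two_eq_one_iff.2 hj, mul_div_assoc]
    · simp [hj, Nat.succ_mod_two_eq_zero_iff.2 hj, mul_div_mul_left_eq_div]

end PathLabel

theorem exists_apply_pcVert_eq {ι : Type} {A : Type*} (k : ι → ℕ) (p : ι → ℕ → A) {a b : A}
    (ha : ∀ i, p i 0 = a) (hb : ∀ i, p i (k i) = b) :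
    ∃ x : Bool ⊕ ((i : ι) × Fin (k i - 1)) → A, ∀ i, ∀ j ≤ k i, x (pcVert k i j) = p i j := by
  refine ⟨Sum.elim (fun v => if v then b else a) fun v => p v.1 (v.2 + 1), fun i j hj => ?_⟩
  unfold pcVert
  split_ifs with hzero hlt
  · simp [hzero, ha]
  · simp [Nat.sub_add_cancel (Nat.pos_of_ne_zero hzero)]
  · simp [hj.antisymm (not_lt.1 hlt), hb]

theorem parameterizesTorus_parallelComp_of_odd_of_even (A : Type*) [CommGroup A] {k : Fin 2 → ℕ}
    (hodd : Odd (k 0)) (heven : Even (k 1)) : (parallelComp k).ParameterizesTorus A := by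
  intro t
  let s (i : Fin 2) (j : ℕ) : A := if h : j < k i then t ⟨i, j, h⟩ else 1
  let c : A := pathLabel (s 1) (k 1) / pathLabel (s 0) (k 0)
  let p (i : Fin 2) : ℕ → A := pathLabel fun j => c * s i j
  have hterminal : ∀ i, p i (k i) = pathLabel (s 1) (k 1) := by
    refine Fin.forall_fin_two.2 ⟨?_, ?_⟩
    · simp [p, c, pathLabel_const_mul, Nat.odd_iff.1 hodd]
    · simp [p, pathLabel_const_mul, Nat.even_iff.1 heven]
  obtain ⟨x, hx⟩ := exists_apply_pcVert_eq k p (fun _ => rfl) hterminal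
  refine ⟨c⁻¹, x, fun ⟨i, j⟩ => ?_⟩
  have hedge : x (pcVert k i j) * x (pcVert k i (j + 1)) = c * t ⟨i, j⟩ := by
    rw [hx i j j.2.le, hx i (j + 1) j.2, pathLabel_mul_pathLabel_succ]
    simp [s]
  exact eq_inv_mul_of_mul_eq hedge.symm

/-- **Table 2, case `l = 1, r = 2`.**  Let `G` be the parallel composition of a path
of odd length `k₁` and a path of even length `k₂`.  Then
`reg G = (k₁ + k₂ - 1)(q-2)`, where `q = |K|`. -/
theorem reg_parallelComp_one_odd_one_even
    (K : Type) [Field K] [Fintype K] (k₁ k₂ : ℕ)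
    (hk₁ : 0 < k₁) (hk₂ : 0 < k₂) (h₁ : Odd k₁) (h₂ : Even k₂) :
    (parallelComp ![k₁, k₂]).reg K = (k₁ + k₂ - 1) * (Fintype.card K - 2) := by
  have : Nonempty ((i : Fin 2) × Fin (![k₁, k₂] i)) := ⟨⟨0, 0, hk₁⟩⟩
  have hX : (parallelComp ![k₁, k₂]).ParameterizesTorus Kˣ :=
    parameterizesTorus_parallelComp_of_odd_of_even Kˣ h₁ h₂
  rw [hX.reg_eq]
  simp [Fintype.card_sigma, Fin.sum_univ_two]
end

section
/- Let G be the parallel composition of r ≥ 3 paths of lengths k_1,...,k_r, where k_1,...,k_{r−1} are odd (with r−1 ≥ 2) and k_r is even, and let X be the projective toric subset parameterized by G. Then reg(G) = (⌊k_1/2⌋ + ... + ⌊k_{r−1}/2⌋ + k_r)(q−2). -/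
open MvPolynomial

/-!
Monomials restrict to characters of the torus `(Kˣ)^V`, and distinct characters are linearly
independent. So the Hilbert function in degree `d` counts the characters of the monomials of degree
`d`, whereas by duality `|X|` counts the characters of the Laurent monomials whose degree is `d`
modulo `n = |Kˣ|`. Two exponent vectors define the same character and agree in degree modulo `n` iff
their difference is balanced modulo `n`. Consequently `reg G + (n - 1)` is the largest value, over
all `a : E → ZMod n`, of the least weight (sum of least nonnegative representatives) in the class of
`a` modulo balanced vectors.

For parallel paths a balanced vector is an alternating twist `y i, -y i, y i, …` along each path.
With a single even path `i₀`, the condition is `y i₀ = 0` and that the twists of the odd paths add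
up to zero. The even path then contributes at most `k i₀ (n - 1)`. Each odd path can be twisted to
weight at most `⌊k i / 2⌋ (n - 1)`, and the constraint on the sum of the twists is paid for by an
averaging argument over two of the odd paths, at a cost of `n - 1`. An explicit vector shows that
these bounds are attained.
-/

/-! ### Characters of a torus over a finite field -/

section FiniteFieldCharacters

variable (K : Type*) [Field K]

lemma linearIndependent_unitsMonoidHom (T : Type*) [Monoid T] :
    LinearIndependent K fun (χ : T →* Kˣ) (x : T) => (χ x : K) :=
  (linearIndependent_monoidHom T K).comp (fun χ => (Units.coeHom K).comp χ) fun _ _ h =>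
    MonoidHom.ext fun x => Units.ext (DFunLike.congr_fun h x)

variable {K} in
lemma pow_eq_pow_of_natCast_eq {a b : ℕ} (h : (a : ZMod (Nat.card Kˣ)) = b) (x : Kˣ) :
    x ^ a = x ^ b :=
  pow_eq_pow_of_modEq ((ZMod.natCast_eq_natCast_iff _ _ _).1 h) pow_card_eq_one'

variable [Finite K]

lemma hasEnoughRootsOfUnity_of_dvd_natCard_units {n : ℕ} (hn : n ∣ Nat.card Kˣ) :
    HasEnoughRootsOfUnity K n := by
  have h_top : rootsOfUnity (Nat.card Kˣ) K = ⊤ := eq_top_iff.2 fun x _ => pow_card_eq_one'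
  have : HasEnoughRootsOfUnity K (Nat.card Kˣ) := .of_card_le (by rw [h_top, Subgroup.card_top])
  exact .of_dvd K hn

lemma hasEnoughRootsOfUnity_exponent_torus (V : Type*) :
    HasEnoughRootsOfUnity K (Monoid.exponent (V → Kˣ)) :=
  hasEnoughRootsOfUnity_of_dvd_natCard_units K <|
    Monoid.exponent_dvd_of_forall_pow_eq_one fun _ => funext fun _ => pow_card_eq_one'

variable {K}

lemma natCast_eq_of_forall_pow_eq {a b : ℕ} (h : ∀ x : Kˣ, x ^ a = x ^ b) :
    (a : ZMod (Nat.card Kˣ)) = b := by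
  obtain ⟨g, hg⟩ := IsCyclic.exists_generator (α := Kˣ)
  rw [ZMod.natCast_eq_natCast_iff, ← orderOf_eq_card_of_forall_mem_zpowers hg]
  exact pow_eq_pow_iff_modEq.1 (h g)

end FiniteFieldCharacters

lemma finrank_map_eq_of_apply_eq_zero_iff {R M N P : Type*} [Ring R]
    [AddCommGroup M] [Module R M] [AddCommGroup N] [Module R N]
    [AddCommGroup P] [Module R P] (p : Submodule R M)
    (f : M →ₗ[R] N) (g : M →ₗ[R] P) (h : ∀ v ∈ p, f v = 0 ↔ g v = 0) :
    Module.finrank R (p.map f) = Module.finrank R (p.map g) := by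
  have h_ker : LinearMap.ker (f.domRestrict p) = LinearMap.ker (g.domRestrict p) := by
    ext ⟨v, hv⟩
    simpa using h v hv
  rw [← LinearMap.range_domRestrict, ← LinearMap.range_domRestrict]
  exact ((f.domRestrict p).quotKerEquivRange.symm ≪≫ₗ Submodule.quotEquivOfEq _ _ h_ker ≪≫ₗ
    (g.domRestrict p).quotKerEquivRange).finrank_eq

/-! ### Sums of residues -/

section ZModSums

variable {n : ℕ}

lemma val_le_of_natCast_eq {x : ℕ} {a : ZMod n} (h : (x : ZMod n) = a) : a.val ≤ x := by
  rw [← h, ZMod.val_natCast]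
  exact Nat.mod_le x n

variable [NeZero n]

lemma val_add_val_neg_one_sub (y : ZMod n) : y.val + (-1 - y).val = n - 1 := by
  have hy : y.val < n := ZMod.val_lt y
  have h_cast : -1 - y = ((n - 1 - y.val : ℕ) : ZMod n) := by
    rw [Nat.sub_sub, Nat.cast_sub (by omega)]
    simp [sub_eq_add_neg, add_comm]
  rw [h_cast, ZMod.val_natCast_of_lt (by omega)]
  omega

lemma two_mul_sum_zmod_val : 2 * ∑ y : ZMod n, y.val = n * (n - 1) := by
  have h_reflect : ∑ y : ZMod n, (-1 - y).val = ∑ y : ZMod n, y.val :=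
    Equiv.sum_comp (Equiv.subLeft (-1)) ZMod.val
  calc 2 * ∑ y : ZMod n, y.val
      = ∑ y : ZMod n, (y.val + (-1 - y).val) := by
        rw [Finset.sum_add_distrib, h_reflect, two_mul]
    _ = n * (n - 1) := by simp [val_add_val_neg_one_sub]

lemma val_neg_one_eq : (-1 : ZMod n).val = n - 1 := by
  simpa using val_add_val_neg_one_sub (0 : ZMod n)

lemma le_two_mul_sum_of_natCast_eq_add {f : ZMod n → ℕ} {s : ZMod n} {m : ℕ}
    (hf : ∀ y, (f y : ZMod n) = s + y) (hm : ∀ y, m ≤ f y) :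
    n * (2 * m + (n - 1)) ≤ 2 * ∑ y, f y := by
  have h_le (y : ZMod n) : m + (s - m + y).val ≤ f y := by
    have := val_le_of_natCast_eq (x := f y - m) (a := s - (m : ZMod n) + y)
      (by rw [Nat.cast_sub (hm y), hf y]; ring)
    have := hm y
    omega
  have h_shift : ∑ y : ZMod n, (s - m + y).val = ∑ y : ZMod n, y.val :=
    Equiv.sum_comp (Equiv.addLeft (s - (m : ZMod n))) ZMod.val
  calc n * (2 * m + (n - 1))
      = 2 * ∑ y : ZMod n, (m + (s - m + y).val) := by
        rw [Finset.sum_add_distrib, mul_add 2, h_shift, two_mul_sum_zmod_val]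
        simp only [Finset.sum_const, Finset.card_univ, ZMod.card, smul_eq_mul]
        ring
    _ ≤ 2 * ∑ y, f y := Nat.mul_le_mul_left 2 (Finset.sum_le_sum fun y _ => h_le y)

end ZModSums

section ResidueWeight

variable {n : ℕ} {E : Type*} [Fintype E]

/-- The sum of the least nonnegative representatives of the entries of a vector of residues: the
least degree of a monomial whose exponents have the given residues. -/
def residueWeight (a : E → ZMod n) : ℕ := ∑ e, (a e).val

lemma natCast_residueWeight [NeZero n] (a : E → ZMod n) :
    (residueWeight a : ZMod n) = ∑ e, a e := by
  simp [residueWeight]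

lemma residueWeight_add_le (a b : E → ZMod n) :
    residueWeight (a + b) ≤ residueWeight a + residueWeight b := by
  rw [residueWeight, residueWeight, residueWeight, ← Finset.sum_add_distrib]
  exact Finset.sum_le_sum fun e _ => ZMod.val_add_le _ _

lemma exists_natCast_eq_sum_eq_iff [NeZero n] [Nonempty E] (a : E → ZMod n) (d : ℕ) :
    (∃ b : E → ℕ, (∀ e, (b e : ZMod n) = a e) ∧ ∑ e, b e = d) ↔
      residueWeight a ≤ d ∧ ∑ e, a e = d := by
  classical
  constructor
  · rintro ⟨b, hb, rfl⟩
    exact ⟨Finset.sum_le_sum fun e _ => val_le_of_natCast_eq (hb e), by simp [hb]⟩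
  · rintro ⟨h_le, h_sum⟩
    obtain ⟨f⟩ := ‹Nonempty E›
    have h_excess : ((d - residueWeight a : ℕ) : ZMod n) = 0 := by
      rw [Nat.cast_sub h_le, natCast_residueWeight, h_sum, sub_self]
    refine ⟨fun e => (a e).val + Pi.single (M := fun _ => ℕ) f (d - residueWeight a) e,
      fun e => ?_, ?_⟩
    · rcases eq_or_ne e f with rfl | hne
      · simp [h_excess]
      · simp [hne]
    · rw [Finset.sum_add_distrib, Finset.sum_pi_single' f]
      simp only [Finset.mem_univ, if_true]
      exact Nat.add_sub_cancel' h_le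

end ResidueWeight

section PathWeight

variable {n k : ℕ}

/-- The weight of the residues `a` along a path after adding `y, -y, y, …`, which is the general
form of a labelling of the path with vanishing sums at the interior vertices. -/
def pathWeight (a : Fin k → ZMod n) (y : ZMod n) : ℕ :=
  residueWeight fun j => a j + (-1) ^ (j : ℕ) * y

variable [NeZero n]

lemma pathWeight_le (a : Fin k → ZMod n) (y : ZMod n) : pathWeight a y ≤ k * (n - 1) := by
  have := Finset.sum_le_card_nsmul Finset.univ (fun j => (a j + (-1) ^ (j : ℕ) * y).val) (n - 1)
    fun j _ => Nat.le_sub_one_of_lt (ZMod.val_lt _)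
  simpa [pathWeight, residueWeight] using this

lemma two_mul_sum_pathWeight (a : Fin k → ZMod n) :
    2 * ∑ y, pathWeight a y = k * (n * (n - 1)) := by
  have h_edge (j : Fin k) : ∑ y, (a j + (-1) ^ (j : ℕ) * y).val = ∑ y : ZMod n, y.val := by
    rcases neg_one_pow_eq_or (ZMod n) (j : ℕ) with h | h
    · simpa [h] using Equiv.sum_comp (Equiv.addLeft (a j)) ZMod.val
    · simpa [h, ← sub_eq_add_neg] using Equiv.sum_comp (Equiv.subLeft (a j)) ZMod.val
  simp only [pathWeight, residueWeight]
  rw [Finset.sum_comm, Finset.mul_sum]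
  simp only [h_edge, two_mul_sum_zmod_val, Finset.sum_const, Finset.card_univ, Fintype.card_fin,
    smul_eq_mul]

lemma sum_fin_neg_one_pow {R : Type*} [Ring R] (k : ℕ) :
    ∑ j : Fin k, (-1 : R) ^ (j : ℕ) = if Even k then 0 else 1 := by
  rw [Fin.sum_univ_eq_sum_range (fun j => (-1 : R) ^ j), neg_one_geom_sum]

lemma natCast_pathWeight_of_odd (hk : Odd k) (a : Fin k → ZMod n) (y : ZMod n) :
    (pathWeight a y : ZMod n) = ∑ j, a j + y := by
  rw [pathWeight, natCast_residueWeight, Finset.sum_add_distrib, ← Finset.sum_mul,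
    sum_fin_neg_one_pow, if_neg (Nat.not_even_iff_odd.2 hk), one_mul]

/-- The values of the weight of an odd path lie in distinct residue classes, so their average
`k (n - 1) / 2` exceeds their minimum by at least `(n - 1) / 2`. -/
lemma exists_pathWeight_le_of_odd (hk : Odd k) (a : Fin k → ZMod n) :
    ∃ y, pathWeight a y ≤ k / 2 * (n - 1) := by
  by_contra! h
  have h_sum := le_two_mul_sum_of_natCast_eq_add (natCast_pathWeight_of_odd hk a) h
  rw [two_mul_sum_pathWeight, mul_left_comm] at h_sum
  have h_average := Nat.le_of_mul_le_mul_left h_sum (NeZero.pos n)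
  obtain ⟨c, rfl⟩ := hk
  rw [show (2 * c + 1) / 2 = c by omega, add_mul, mul_assoc, one_mul] at h_average
  omega

lemma exists_pathWeight_add_pathWeight_le_of_odd {l : ℕ} (hk : Odd k) (hl : Odd l)
    (a : Fin k → ZMod n) (b : Fin l → ZMod n) (s : ZMod n) :
    ∃ y, pathWeight a y + pathWeight b (s - y) ≤ (k / 2 + l / 2 + 1) * (n - 1) := by
  have h_reflect : ∑ y, pathWeight b (s - y) = ∑ y, pathWeight b y :=
    (Equiv.subLeft s).sum_comp (pathWeight b)
  have h_sum : ∑ y, (pathWeight a y + pathWeight b (s - y)) =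
      n * ((k / 2 + l / 2 + 1) * (n - 1)) := by
    refine Nat.eq_of_mul_eq_mul_left two_pos ?_
    rw [Finset.sum_add_distrib, h_reflect, mul_add, two_mul_sum_pathWeight,
      two_mul_sum_pathWeight, ← add_mul,
      show k + l = 2 * (k / 2 + l / 2 + 1) by obtain ⟨_, rfl⟩ := hk; obtain ⟨_, rfl⟩ := hl; omega]
    ring
  obtain ⟨y, -, hy⟩ := Finset.exists_le_of_sum_le (s := Finset.univ)
    (f := fun y => pathWeight a y + pathWeight b (s - y))
    (g := fun _ => (k / 2 + l / 2 + 1) * (n - 1)) Finset.univ_nonempty (by simp [h_sum])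
  exact ⟨y, hy⟩

lemma exists_sum_eq_zero_sum_pathWeight_le {ι : Type*} {k : ι → ℕ} {s : Finset ι}
    (hs : s.Nontrivial) (hk : ∀ i ∈ s, Odd (k i)) (a : ∀ i, Fin (k i) → ZMod n) :
    ∃ y : ι → ZMod n, ∑ i ∈ s, y i = 0 ∧
      ∑ i ∈ s, pathWeight (a i) (y i) ≤ (∑ i ∈ s, k i / 2 + 1) * (n - 1) := by
  classical
  obtain ⟨p, hp, q, hq, hpq⟩ := hs
  obtain ⟨t, hpt, rfl⟩ : ∃ t, p ∉ t ∧ insert p t = s := ⟨_, s.notMem_erase p, s.insert_erase hp⟩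
  obtain ⟨t, hqt, rfl⟩ : ∃ t', q ∉ t' ∧ insert q t' = t :=
    ⟨_, t.notMem_erase q, t.insert_erase (Finset.mem_of_mem_insert_of_ne hq hpq.symm)⟩
  have h_min (i : ι) (hi : i ∈ t) : ∃ w, pathWeight (a i) w ≤ k i / 2 * (n - 1) :=
    exists_pathWeight_le_of_odd (hk i (by simp [hi])) (a i)
  choose! w hw using h_min
  obtain ⟨y, hy⟩ := exists_pathWeight_add_pathWeight_le_of_odd (hk p (by simp)) (hk q (by simp))
    (a p) (a q) (-∑ i ∈ t, w i)
  have hp_t (i : ι) (hi : i ∈ t) : i ≠ p := by rintro rfl; simp [hi] at hpt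
  have hq_t (i : ι) (hi : i ∈ t) : i ≠ q := by rintro rfl; exact hqt hi
  let z : ι → ZMod n := Function.update (Function.update w q (-∑ i ∈ t, w i - y)) p y
  have hzp : z p = y := Function.update_self ..
  have hzq : z q = -∑ i ∈ t, w i - y := by simp [z, hpq.symm]
  have hzt (i : ι) (hi : i ∈ t) : z i = w i := by simp [z, hp_t i hi, hq_t i hi]
  refine ⟨z, ?_, ?_⟩
  · rw [Finset.sum_insert hpt, Finset.sum_insert hqt, hzp, hzq, Finset.sum_congr rfl hzt]
    ring
  · have h_rest : ∑ i ∈ t, pathWeight (a i) (z i) ≤ (∑ i ∈ t, k i / 2) * (n - 1) := by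
      rw [Finset.sum_mul]
      exact Finset.sum_le_sum fun i hi => by rw [hzt i hi]; exact hw i hi
    simp only [Finset.sum_insert hpt, Finset.sum_insert hqt, hzp, hzq]
    linarith

lemma pathWeight_ite_odd_of_odd (hk : Odd k) (y : ZMod n) :
    pathWeight (fun j : Fin k => if Odd (j : ℕ) then -1 else 0) y = k / 2 * (n - 1) + y.val := by
  obtain ⟨h, rfl⟩ := hk
  have h_range (m : ℕ) : pathWeight (fun j : Fin m => if Odd (j : ℕ) then -1 else 0) y =
      ∑ j ∈ Finset.range m, ((if Odd j then -1 else 0) + (-1) ^ j * y).val :=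
    Fin.sum_univ_eq_sum_range (fun j => ((if Odd j then -1 else 0) + (-1) ^ j * y).val) m
  rw [show (2 * h + 1) / 2 = h by omega, h_range]
  induction h with
  | zero => simp
  | succ h ih =>
    have h_odd : Odd (2 * h + 1) := odd_two_mul_add_one h
    have h_even : Even (2 * h + 2) := ⟨h + 1, by ring⟩
    rw [show 2 * (h + 1) + 1 = 2 * h + 3 by ring, Finset.sum_range_succ, Finset.sum_range_succ, ih,
      if_pos h_odd, h_odd.neg_one_pow, if_neg (Nat.not_odd_iff_even.2 h_even),
      h_even.neg_one_pow, neg_one_mul, ← sub_eq_add_neg, zero_add, one_mul, add_one_mul,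
      ← val_add_val_neg_one_sub y]
    ring

end PathWeight

/-! ### The Hilbert function of a toric set -/

namespace Multigraph

section Characters

variable {V E : Type} [Fintype E] (G : Multigraph V E) (K : Type) [Field K]

/-- The character of the torus `(Kˣ)^V` obtained by restricting the monomial `∏ e, t_e ^ b e` to
the parameterization of the toric set. -/
def monomialChar (b : E → ℕ) : (V → Kˣ) →* Kˣ :=
  ∏ e, (Pi.evalMonoidHom (fun _ => Kˣ) (G.fst e) * Pi.evalMonoidHom _ (G.snd e)) ^ b e

lemma monomialChar_apply (b : E → ℕ) (x : V → Kˣ) :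
    G.monomialChar K b x = ∏ e, (x (G.fst e) * x (G.snd e)) ^ b e := by
  simp [monomialChar]

lemma monomialChar_zero : G.monomialChar K 0 = 1 := by
  ext x : 1
  simp [monomialChar_apply]

lemma monomialChar_add (b c : E → ℕ) :
    G.monomialChar K (b + c) = G.monomialChar K b * G.monomialChar K c := by
  ext x : 1
  simp [monomialChar_apply, pow_add, Finset.prod_mul_distrib]

lemma monomialChar_single_apply [DecidableEq E] (e : E) (x : V → Kˣ) :
    G.monomialChar K (Pi.single e 1) x = x (G.fst e) * x (G.snd e) := by
  rw [monomialChar_apply, Fintype.prod_eq_single e fun f hf => by simp [Pi.single_eq_of_ne hf]]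
  simp

lemma eval_point_monomial (b : E →₀ ℕ) (x : V → Kˣ) :
    eval (G.point K x) (monomial b 1) = G.monomialChar K b x := by
  rw [eval_monomial, one_mul, Finsupp.prod_fintype _ _ fun _ => pow_zero _, monomialChar_apply]
  simp [point]

/-- The characters of the monomials of degree `d`. -/
def monomialChars (d : ℕ) : Set ((V → Kˣ) →* Kˣ) :=
  {χ | ∃ b : E → ℕ, ∑ e, b e = d ∧ G.monomialChar K b = χ}

/-- The characters of the Laurent monomials whose degree is `r` modulo `|Kˣ|`. As characters of the
torus have order dividing `|Kˣ|`, nonnegative exponents suffice. -/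
def laurentChars (r : ZMod (Nat.card Kˣ)) : Set ((V → Kˣ) →* Kˣ) :=
  {χ | ∃ b : E → ℕ, (∑ e, (b e : ZMod (Nat.card Kˣ))) = r ∧ G.monomialChar K b = χ}

lemma monomialChars_subset_laurentChars (d : ℕ) : G.monomialChars K d ⊆ G.laurentChars K d := by
  rintro _ ⟨b, rfl, rfl⟩
  exact ⟨b, by push_cast; rfl, rfl⟩

lemma mul_mem_laurentChars {r s : ZMod (Nat.card Kˣ)} {χ ψ : (V → Kˣ) →* Kˣ}
    (hχ : χ ∈ G.laurentChars K r) (hψ : ψ ∈ G.laurentChars K s) :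
    χ * ψ ∈ G.laurentChars K (r + s) := by
  obtain ⟨b, rfl, rfl⟩ := hχ
  obtain ⟨c, rfl, rfl⟩ := hψ
  exact ⟨b + c, by simp [Finset.sum_add_distrib], G.monomialChar_add K b c⟩

variable [Finite K]

lemma inv_mem_laurentChars {r : ZMod (Nat.card Kˣ)} {χ : (V → Kˣ) →* Kˣ}
    (hχ : χ ∈ G.laurentChars K r) : χ⁻¹ ∈ G.laurentChars K (-r) := by
  obtain ⟨b, rfl, rfl⟩ := hχ
  have h_inv (x : Kˣ) : x ^ (Nat.card Kˣ - 1) = x⁻¹ := by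
    rw [eq_inv_iff_mul_eq_one, pow_sub_one_mul (NeZero.ne _), pow_card_eq_one']
  refine ⟨(Nat.card Kˣ - 1) • b, ?_, ?_⟩
  · simp [Nat.cast_pred Nat.card_pos]
  · ext x : 1
    simp only [MonoidHom.inv_apply, monomialChar_apply, Pi.smul_apply, smul_eq_mul, pow_mul, h_inv,
      inv_pow, Finset.prod_inv_distrib]

/-- The group of characters of Laurent monomials of degree zero: the characters of the torus that
descend to the projective toric set. -/
def laurentCharGroup : Subgroup ((V → Kˣ) →* Kˣ) where
  carrier := G.laurentChars K 0
  one_mem' := ⟨0, by simp, G.monomialChar_zero K⟩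
  mul_mem' hχ hψ := by simpa using G.mul_mem_laurentChars K hχ hψ
  inv_mem' hχ := by simpa using G.inv_mem_laurentChars K hχ

lemma ncard_laurentChars [Nonempty E] (d : ℕ) :
    (G.laurentChars K d).ncard = Nat.card (G.laurentCharGroup K) := by
  classical
  obtain ⟨e⟩ := ‹Nonempty E›
  have h_mem : G.monomialChar K (Pi.single e d) ∈ G.laurentChars K d :=
    ⟨_, by rw [← Nat.cast_sum]; simp, rfl⟩
  have h_coset : G.laurentChars K d =
      (G.monomialChar K (Pi.single e d) * ·) '' G.laurentChars K 0 := by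
    refine Set.Subset.antisymm (fun χ hχ => ⟨(G.monomialChar K (Pi.single e d))⁻¹ * χ, ?_, ?_⟩) ?_
    · simpa using G.mul_mem_laurentChars K (G.inv_mem_laurentChars K h_mem) hχ
    · ext x : 1
      simp
    · rintro _ ⟨χ, hχ, rfl⟩
      simpa using G.mul_mem_laurentChars K h_mem hχ
  rw [h_coset, Set.ncard_image_of_injective _ (mul_right_injective _)]
  rfl

end Characters

section ToricSet

variable {V E : Type} [Fintype E] (G : Multigraph V E) {K : Type} [Field K]

lemma monomialChar_eq_of_smul_point_eq {b : E → ℕ} (hb : ∑ e, (b e : ZMod (Nat.card Kˣ)) = 0)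
    {x y : V → Kˣ} {c : Kˣ} (h : c • G.point K y = G.point K x) :
    G.monomialChar K b x = G.monomialChar K b y := by
  have h_edge (e : E) : x (G.fst e) * x (G.snd e) = c * (y (G.fst e) * y (G.snd e)) :=
    Units.ext (by simpa [point, Units.smul_def] using (congrFun h e).symm)
  have h_pow : c ^ ∑ e, b e = 1 := by
    rw [pow_eq_pow_of_natCast_eq (b := 0) (by simpa using hb) c, pow_zero]
  simp only [monomialChar_apply, h_edge, mul_pow c, Finset.prod_mul_distrib,
    Finset.prod_pow_eq_pow_sum, h_pow, one_mul]

variable [Finite K]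

lemma monomialChar_single_mul_inv_mem [DecidableEq E] (e f : E) :
    G.monomialChar K (Pi.single e 1) * (G.monomialChar K (Pi.single f 1))⁻¹ ∈
      G.laurentCharGroup K := by
  have h_mem (e : E) : G.monomialChar K (Pi.single e 1) ∈ G.laurentChars K 1 :=
    ⟨_, by rw [← Nat.cast_sum]; simp, rfl⟩
  have := G.mul_mem_laurentChars K (h_mem e) (G.inv_mem_laurentChars K (h_mem f))
  rwa [add_neg_cancel] at this

lemma orbit_point_eq_iff [Nonempty E] (x y : V → Kˣ) :
    MulAction.orbit Kˣ (G.point K x) = MulAction.orbit Kˣ (G.point K y) ↔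
      ∀ χ ∈ G.laurentCharGroup K, χ x = χ y := by
  classical
  rw [MulAction.orbit_eq_iff, MulAction.mem_orbit_iff]
  constructor
  · rintro ⟨c, hc⟩ _ ⟨b, hb, rfl⟩
    exact G.monomialChar_eq_of_smul_point_eq hb hc
  · intro h
    obtain ⟨f⟩ := ‹Nonempty E›
    refine ⟨(x (G.fst f) * x (G.snd f)) / (y (G.fst f) * y (G.snd f)), funext fun e => ?_⟩
    have h_ratio := h _ (G.monomialChar_single_mul_inv_mem e f)
    simp only [MonoidHom.mul_apply, MonoidHom.inv_apply, monomialChar_single_apply,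
      ← div_eq_mul_inv] at h_ratio
    rw [div_eq_div_iff_div_eq_div, div_eq_iff_eq_mul] at h_ratio
    simpa [point, Units.smul_def] using congrArg Units.val h_ratio.symm

variable (K) in
lemma ncard_toricSet [Finite V] [Nonempty E] :
    (G.toricSet K).ncard = Nat.card (G.laurentCharGroup K) := by
  have := hasEnoughRootsOfUnity_exponent_torus K V
  let N : Subgroup (V → Kˣ) :=
    (CommGroup.subgroupOrderIsoSubgroupMonoidHom (V → Kˣ) K).symm
      (OrderDual.toDual (G.laurentCharGroup K))
  have h_fibre (x y : V → Kˣ) : QuotientGroup.leftRel N x y ↔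
      MulAction.orbit Kˣ (G.point K x) = MulAction.orbit Kˣ (G.point K y) := by
    rw [QuotientGroup.leftRel_apply, orbit_point_eq_iff,
      CommGroup.mem_subgroupOrderIsoSubgroupMonoidHom_symm_iff]
    simp only [map_mul, map_inv, inv_mul_eq_one]
  calc (G.toricSet K).ncard
      = Nat.card ((V → Kˣ) ⧸ N) :=
        Nat.card_congr ((Quotient.congrRight h_fibre).trans
          (Setoid.quotientKerEquivRange fun x => MulAction.orbit Kˣ (G.point K x))).symm
    _ = Nat.card (G.laurentCharGroup K) := by
        rw [← CommGroup.card_subgroupOrderIsoSubgroupMonoidHom K N, OrderIso.apply_symm_apply]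
        rfl

end ToricSet

section HilbertFunction

variable {V E : Type} (G : Multigraph V E) (K : Type) [Field K]

/-- Evaluation of polynomials along the parameterization of the toric set, as a linear map to the
functions on the torus. -/
noncomputable def torusEval : MvPolynomial E K →ₗ[K] ((V → Kˣ) → K) :=
  LinearMap.pi fun x => (aeval (R := K) (G.point K x)).toLinearMap

lemma torusEval_apply (f : MvPolynomial E K) (x : V → Kˣ) :
    G.torusEval K f x = eval (G.point K x) f := by
  simp [torusEval, aeval_eq_eval]

lemma mem_vanishingIdeal_iff_torusEval_eq_zero {d : ℕ} {f : MvPolynomial E K}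
    (hf : f ∈ homogeneousSubmodule E K d) :
    f ∈ G.vanishingIdeal K ↔ G.torusEval K f = 0 := by
  change (∀ x d', eval (G.point K x) (homogeneousComponent d' f) = 0) ↔ _
  simp only [homogeneousComponent_of_mem hf, funext_iff, torusEval_apply, Pi.zero_apply]
  refine forall_congr' fun x => ⟨fun h => by simpa using h d, fun h d' => ?_⟩
  split_ifs
  · exact h
  · exact map_zero _

variable [Fintype E]

lemma map_torusEval_homogeneousSubmodule (d : ℕ) :
    (homogeneousSubmodule E K d).map (G.torusEval K) =
      Submodule.span K ((fun (χ : (V → Kˣ) →* Kˣ) x => (χ x : K)) '' G.monomialChars K d) := by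
  have h_monomial (b : E →₀ ℕ) :
      G.torusEval K (monomial b 1) = fun x => (G.monomialChar K b x : K) :=
    funext fun x => by rw [torusEval_apply, eval_point_monomial]
  rw [homogeneousSubmodule_eq_finsupp_supported, AddMonoidAlgebra.supported_eq_span_single,
    Submodule.map_span]
  congr 1
  ext f
  constructor
  · rintro ⟨_, ⟨b, hb, rfl⟩, rfl⟩
    exact ⟨_, ⟨b, by simpa [Finsupp.degree_eq_sum] using hb, rfl⟩, (h_monomial b).symm⟩
  · rintro ⟨_, ⟨b, hb, rfl⟩, rfl⟩
    exact ⟨_, ⟨Finsupp.equivFunOnFinite.symm b, by simpa [Finsupp.degree_eq_sum] using hb, rfl⟩,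
      h_monomial (Finsupp.equivFunOnFinite.symm b)⟩

variable [Finite V] [Finite K]

lemma hilbert_eq_ncard_monomialChars (d : ℕ) :
    G.hilbert K d = (G.monomialChars K d).ncard := by
  have : Fintype (G.monomialChars K d) := Fintype.ofFinite _
  have h_independent := (linearIndependent_unitsMonoidHom K (V → Kˣ)).comp
    ((↑) : G.monomialChars K d → _) Subtype.val_injective
  calc G.hilbert K d
      = Module.finrank K ((homogeneousSubmodule E K d).map (G.torusEval K)) :=
        finrank_map_eq_of_apply_eq_zero_iff _ _ _ fun f hf => by
          rw [← mem_vanishingIdeal_iff_torusEval_eq_zero G K hf]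
          exact Ideal.Quotient.eq_zero_iff_mem
    _ = Fintype.card (G.monomialChars K d) := by
        rw [map_torusEval_homogeneousSubmodule, ← finrank_span_eq_card h_independent,
          Set.range_comp, Subtype.range_coe]
    _ = (G.monomialChars K d).ncard := by
        rw [← Nat.card_coe_set_eq, Nat.card_eq_fintype_card]

lemma hilbert_eq_ncard_toricSet_iff [Nonempty E] (d : ℕ) :
    G.hilbert K d = (G.toricSet K).ncard ↔ G.laurentChars K d ⊆ G.monomialChars K d := by
  rw [hilbert_eq_ncard_monomialChars, ncard_toricSet, ← G.ncard_laurentChars K d]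
  exact ⟨fun h => (Set.eq_of_subset_of_ncard_le (G.monomialChars_subset_laurentChars K d)
    h.ge).ge, fun h => congrArg _ ((G.monomialChars_subset_laurentChars K d).antisymm h)⟩

end HilbertFunction

section Balanced

variable {V E : Type} [Fintype E] [DecidableEq V] (G : Multigraph V E)

/-- The sum of the edge labels `c` around the vertex `v`: the exponent of `x v` in the monomial with
exponents `c`. -/
def vertexSum {A : Type*} [AddCommMonoid A] (c : E → A) (v : V) : A :=
  (∑ e with G.fst e = v, c e) + ∑ e with G.snd e = v, c e

lemma vertexSum_sub {A : Type*} [AddCommGroup A] (c c' : E → A) (v : V) :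
    G.vertexSum (c - c') v = G.vertexSum c v - G.vertexSum c' v := by
  simp only [vertexSum, Pi.sub_apply, Finset.sum_sub_distrib]
  abel

lemma vertexSum_natCast {A : Type*} [AddCommMonoidWithOne A] (b : E → ℕ) (v : V) :
    G.vertexSum (fun e => (b e : A)) v = ((G.vertexSum b v : ℕ) : A) := by
  simp [vertexSum]

/-- A labelling of the edges is balanced if the labels around each vertex and all labels together
sum to zero. For labels in `ZMod |Kˣ|` these are the exponents of the Laurent monomials that are
constantly `1` on the torus, the second condition saying that their degree is trivial. -/
def IsBalanced {A : Type*} [AddCommMonoid A] (z : E → A) : Prop :=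
  (∀ v, G.vertexSum z v = 0) ∧ ∑ e, z e = 0

variable {K : Type} [Field K]

lemma monomialChar_apply_eq_prod_pow_vertexSum [Fintype V] (b : E → ℕ) (x : V → Kˣ) :
    G.monomialChar K b x = ∏ v, x v ^ G.vertexSum b v := by
  have h_fiber (f : E → V) : ∏ e, x (f e) ^ b e = ∏ v, x v ^ ∑ e with f e = v, b e := by
    rw [← Finset.prod_fiberwise _ f]
    refine Finset.prod_congr rfl fun v _ => ?_
    rw [← Finset.prod_pow_eq_pow_sum]
    exact Finset.prod_congr rfl fun e he => by rw [(Finset.mem_filter.1 he).2]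
  simp only [monomialChar_apply, mul_pow, Finset.prod_mul_distrib, h_fiber, vertexSum, pow_add]

lemma monomialChar_eq_iff_vertexSum_natCast_eq [Finite V] [Finite K] (b c : E → ℕ) :
    G.monomialChar K b = G.monomialChar K c ↔ ∀ v,
      G.vertexSum (fun e => (b e : ZMod (Nat.card Kˣ))) v = G.vertexSum (fun e => ↑(c e)) v := by
  have := Fintype.ofFinite V
  simp only [vertexSum_natCast]
  refine ⟨fun h v => natCast_eq_of_forall_pow_eq fun g => ?_, fun h => MonoidHom.ext fun x => ?_⟩
  · have h_eval := DFunLike.congr_fun h (Pi.mulSingle v g)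
    simpa [monomialChar_apply_eq_prod_pow_vertexSum, Pi.mulSingle_apply, ite_pow] using h_eval
  · simp only [monomialChar_apply_eq_prod_pow_vertexSum]
    exact Finset.prod_congr rfl fun v _ => pow_eq_pow_of_natCast_eq (h v) (x v)

end Balanced

section Regularity

variable {V E : Type} [Finite V] [DecidableEq V] [Fintype E] [Nonempty E] (G : Multigraph V E)
  (K : Type) [Field K] [Finite K]

lemma hilbert_eq_ncard_toricSet_iff_residueWeight (d : ℕ) :
    G.hilbert K d = (G.toricSet K).ncard ↔ ∀ a : E → ZMod (Nat.card Kˣ), ∑ e, a e = d →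
      ∃ z, G.IsBalanced z ∧ residueWeight (a + z) ≤ d := by
  rw [hilbert_eq_ncard_toricSet_iff]
  constructor
  · intro h a ha
    obtain ⟨c, hc, h_char⟩ : G.monomialChar K (fun e => (a e).val) ∈ G.monomialChars K d :=
      h ⟨_, by simpa using ha, rfl⟩
    rw [monomialChar_eq_iff_vertexSum_natCast_eq] at h_char
    simp only [ZMod.natCast_val, ZMod.cast_id'] at h_char
    refine ⟨(fun e => (c e : ZMod _)) - a, ⟨fun v => ?_, ?_⟩, ?_⟩
    · rw [vertexSum_sub, h_char v]
      exact sub_self _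
    · simp [ha, ← hc]
    · exact ((exists_natCast_eq_sum_eq_iff _ d).1 ⟨c, fun e => by simp, hc⟩).1
  · rintro h _ ⟨b, hb, rfl⟩
    obtain ⟨z, ⟨hz_vertex, hz_sum⟩, h_weight⟩ := h (fun e => b e) hb
    obtain ⟨c, hc, hc_sum⟩ := (exists_natCast_eq_sum_eq_iff ((fun e => (b e : ZMod _)) + z) d).2
      ⟨h_weight, by simp [Finset.sum_add_distrib, hb, hz_sum]⟩
    refine ⟨c, hc_sum, (G.monomialChar_eq_iff_vertexSum_natCast_eq c b).2 fun v => ?_⟩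
    rw [← sub_eq_zero, ← vertexSum_sub, ← hz_vertex v]
    congr 1
    ext e
    simp [hc e]

lemma hilbert_eq_ncard_toricSet_iff_forall_residueWeight_le (d : ℕ) :
    G.hilbert K d = (G.toricSet K).ncard ↔ ∀ a : E → ZMod (Nat.card Kˣ),
      ∃ z, G.IsBalanced z ∧ residueWeight (a + z) ≤ d + (Nat.card Kˣ - 1) := by
  classical
  rw [hilbert_eq_ncard_toricSet_iff_residueWeight]
  constructor
  · intro h a
    obtain ⟨f⟩ := ‹Nonempty E›
    -- Correcting the degree of `a` in one coordinate costs at most `n - 1`.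
    let c : E → ZMod (Nat.card Kˣ) := Pi.single f (∑ e, a e - d)
    have hc : residueWeight c ≤ Nat.card Kˣ - 1 := by
      rw [residueWeight, Fintype.sum_eq_single f fun e he => by simp [c, he]]
      exact Nat.le_sub_one_of_lt (ZMod.val_lt _)
    obtain ⟨z, hz, h_weight⟩ := h (a - c) (by simp [c])
    refine ⟨z, hz, ?_⟩
    calc residueWeight (a + z) = residueWeight (a - c + z + c) := by congr 1; abel
      _ ≤ residueWeight (a - c + z) + residueWeight c := residueWeight_add_le _ _
      _ ≤ d + (Nat.card Kˣ - 1) := add_le_add h_weight hc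
  · intro h a ha
    obtain ⟨z, hz, h_weight⟩ := h a
    refine ⟨z, hz, ?_⟩
    have h_modEq : residueWeight (a + z) ≡ d [MOD Nat.card Kˣ] := by
      rw [← ZMod.natCast_eq_natCast_iff, natCast_residueWeight]
      simp [Finset.sum_add_distrib, ha, hz.2]
    by_contra! h_lt
    have := (Nat.modEq_iff_dvd' h_lt.le).1 h_modEq.symm
    have := Nat.le_of_dvd (Nat.sub_pos_of_lt h_lt) this
    have : 0 < Nat.card Kˣ := Nat.card_pos
    omega

theorem reg_eq_of_residueWeight_bounds {D : ℕ}
    (h_upper : ∀ a : E → ZMod (Nat.card Kˣ),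
      ∃ z, G.IsBalanced z ∧ residueWeight (a + z) ≤ D + (Nat.card Kˣ - 1))
    (h_lower : ∃ a : E → ZMod (Nat.card Kˣ),
      ∀ z, G.IsBalanced z → D + (Nat.card Kˣ - 1) ≤ residueWeight (a + z)) :
    G.reg K = D := by
  refine IsLeast.csInf_eq ⟨?_, fun d hd => ?_⟩
  · exact (G.hilbert_eq_ncard_toricSet_iff_forall_residueWeight_le K D).2 h_upper
  · obtain ⟨a, ha⟩ := h_lower
    obtain ⟨z, hz, h_weight⟩ :=
      (G.hilbert_eq_ncard_toricSet_iff_forall_residueWeight_le K d).1 hd a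
    exact Nat.le_of_add_le_add_right ((ha z hz).trans h_weight)

end Regularity

end Multigraph

/-! ### Parallel compositions of paths -/

section ParallelComposition

variable {ι : Type} {k : ι → ℕ}

lemma pcVert_eq_inl_false_iff {i : ι} {j : ℕ} : pcVert k i j = Sum.inl false ↔ j = 0 := by
  unfold pcVert
  split_ifs <;> simp_all

lemma pcVert_eq_inl_true_iff {i : ι} {j : ℕ} :
    pcVert k i j = Sum.inl true ↔ j ≠ 0 ∧ k i ≤ j := by
  unfold pcVert
  split_ifs <;> simp_all

lemma pcVert_eq_inr_iff {i i' : ι} {j : ℕ} {l : Fin (k i' - 1)} :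
    pcVert k i j = Sum.inr ⟨i', l⟩ ↔ i = i' ∧ j = l + 1 := by
  have hl := l.2
  unfold pcVert
  split_ifs with h_zero h_lt
  · simp [h_zero]
  · constructor
    · intro h
      obtain ⟨rfl, h⟩ := Sigma.mk.inj (Sum.inr.inj h)
      obtain rfl := eq_of_heq h
      exact ⟨rfl, (Nat.sub_one_add_one h_zero).symm⟩
    · rintro ⟨rfl, rfl⟩
      rfl
  · simp only [false_iff]
    rintro ⟨rfl, rfl⟩
    omega

lemma sigma_fin_eq_mk_iff {e : (i : ι) × Fin (k i)} {i : ι} {j : Fin (k i)} :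
    e = ⟨i, j⟩ ↔ e.1 = i ∧ (e.2 : ℕ) = j := by
  obtain ⟨i', j'⟩ := e
  constructor
  · rintro ⟨⟩
    exact ⟨rfl, rfl⟩
  · rintro ⟨rfl : i' = i, hj⟩
    exact congrArg _ (Fin.ext hj)

lemma sum_sigma_filter_eq_of_forall_iff {A : Type*} [AddCommMonoid A] [Fintype ι]
    (c : ((i : ι) × Fin (k i)) → A) (f : ∀ i, Fin (k i)) (p : ((i : ι) × Fin (k i)) → Prop)
    [DecidablePred p] (hp : ∀ e, p e ↔ e.2 = f e.1) :
    ∑ e with p e, c e = ∑ i, c ⟨i, f i⟩ := by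
  rw [Finset.sum_filter, Fintype.sum_sigma]
  simp [hp]

variable (k) in
/-- The labelling of the edges of the `i`-th path by `y i, -y i, y i, …`. -/
def alternatingLabels {R : Type*} [Ring R] (y : ι → R) : ((i : ι) × Fin (k i)) → R :=
  fun e => (-1) ^ (e.2 : ℕ) * y e.1

lemma alternatingLabels_add {R : Type*} [Ring R] (y y' : ι → R) :
    alternatingLabels k (y + y') = alternatingLabels k y + alternatingLabels k y' :=
  funext fun _ => mul_add _ _ _

variable [Fintype ι]

lemma sum_alternatingLabels {R : Type*} [Ring R] (y : ι → R) :
    ∑ e, alternatingLabels k y e = ∑ i with Odd (k i), y i := by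
  simp only [Fintype.sum_sigma, alternatingLabels, ← Finset.sum_mul, sum_fin_neg_one_pow,
    Finset.sum_filter, ← Nat.not_even_iff_odd, ite_not, ite_mul, zero_mul, one_mul]

variable [DecidableEq ι]

section VertexSum

variable {A : Type*} [AddCommMonoid A] (c : ((i : ι) × Fin (k i)) → A)

lemma vertexSum_parallelComp_inl_false (hk : ∀ i, 0 < k i) :
    (parallelComp k).vertexSum c (Sum.inl false) = ∑ i, c ⟨i, ⟨0, hk i⟩⟩ := by
  unfold Multigraph.vertexSum parallelComp
  rw [sum_sigma_filter_eq_of_forall_iff c (fun i => ⟨0, hk i⟩) _ fun e => by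
    simp [pcVert_eq_inl_false_iff, Fin.ext_iff]]
  simp [pcVert_eq_inl_false_iff]

lemma vertexSum_parallelComp_inl_true (hk : ∀ i, 0 < k i) :
    (parallelComp k).vertexSum c (Sum.inl true) =
      ∑ i, c ⟨i, ⟨k i - 1, Nat.sub_one_lt_of_lt (hk i)⟩⟩ := by
  unfold Multigraph.vertexSum parallelComp
  rw [sum_sigma_filter_eq_of_forall_iff c (fun i => ⟨k i - 1, Nat.sub_one_lt_of_lt (hk i)⟩)
    (fun e => pcVert k e.1 (e.2 + 1) = _) fun e => by
      have := e.2.2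
      simp only [pcVert_eq_inl_true_iff, Fin.ext_iff]
      omega]
  have h_fst (e : (i : ι) × Fin (k i)) : pcVert k e.1 e.2 ≠ Sum.inl true := fun h =>
    (pcVert_eq_inl_true_iff.1 h).2.not_gt e.2.2
  simp [h_fst]

lemma vertexSum_parallelComp_inr (i : ι) (l : Fin (k i - 1)) :
    (parallelComp k).vertexSum c (Sum.inr ⟨i, l⟩) =
      c ⟨i, ⟨l + 1, by omega⟩⟩ + c ⟨i, ⟨l, by omega⟩⟩ := by
  unfold Multigraph.vertexSum parallelComp
  have h_fst (e : (i : ι) × Fin (k i)) :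
      pcVert k e.1 e.2 = Sum.inr ⟨i, l⟩ ↔ e = ⟨i, ⟨l + 1, by omega⟩⟩ := by
    rw [pcVert_eq_inr_iff, sigma_fin_eq_mk_iff]
  have h_snd (e : (i : ι) × Fin (k i)) :
      pcVert k e.1 (e.2 + 1) = Sum.inr ⟨i, l⟩ ↔ e = ⟨i, ⟨l, by omega⟩⟩ := by
    rw [pcVert_eq_inr_iff, sigma_fin_eq_mk_iff, Nat.add_right_cancel_iff]
  simp [h_fst, h_snd, Finset.sum_filter]

end VertexSum

section Alternating

variable {R : Type*} [Ring R]

lemma eq_alternatingLabels_of_isBalanced (hk : ∀ i, 0 < k i) {z : ((i : ι) × Fin (k i)) → R}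
    (hz : (parallelComp k).IsBalanced z) :
    z = alternatingLabels k fun i => z ⟨i, ⟨0, hk i⟩⟩ := by
  funext ⟨i, j, hj⟩
  induction j with
  | zero => simp [alternatingLabels]
  | succ j ih =>
    have h_vertex := hz.1 (Sum.inr ⟨i, ⟨j, by omega⟩⟩)
    rw [vertexSum_parallelComp_inr, add_eq_zero_iff_eq_neg] at h_vertex
    rw [h_vertex, ih (by omega)]
    simp [alternatingLabels, pow_succ]

lemma vertexSum_alternatingLabels_inl_false (hk : ∀ i, 0 < k i) (y : ι → R) :
    (parallelComp k).vertexSum (alternatingLabels k y) (Sum.inl false) =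
      ∑ i with Odd (k i), y i + ∑ i with Even (k i), y i := by
  simp [vertexSum_parallelComp_inl_false _ hk, alternatingLabels, ← Nat.not_odd_iff_even,
    Finset.sum_filter_add_sum_filter_not]

lemma vertexSum_alternatingLabels_inl_true (hk : ∀ i, 0 < k i) (y : ι → R) :
    (parallelComp k).vertexSum (alternatingLabels k y) (Sum.inl true) =
      ∑ i with Odd (k i), y i - ∑ i with Even (k i), y i := by
  rw [vertexSum_parallelComp_inl_true _ hk, Finset.sum_filter, Finset.sum_filter,
    ← Finset.sum_sub_distrib]
  refine Finset.sum_congr rfl fun i _ => ?_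
  rcases Nat.even_or_odd (k i) with h | h
  · have h_last : Odd (k i - 1) := Nat.Even.sub_odd (hk i) h odd_one
    simp [alternatingLabels, h, Nat.not_odd_iff_even.2 h, h_last.neg_one_pow]
  · have h_last : Even (k i - 1) := Nat.Odd.sub_odd h odd_one
    simp [alternatingLabels, h, Nat.not_even_iff_odd.2 h, h_last.neg_one_pow]

lemma isBalanced_alternatingLabels_iff (hk : ∀ i, 0 < k i) {y : ι → R} :
    (parallelComp k).IsBalanced (alternatingLabels k y) ↔
      ∑ i with Odd (k i), y i = 0 ∧ ∑ i with Even (k i), y i = 0 := by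
  rw [Multigraph.IsBalanced, sum_alternatingLabels]
  constructor
  · rintro ⟨h_vertex, h_odd⟩
    have h_initial := h_vertex (Sum.inl false)
    rw [vertexSum_alternatingLabels_inl_false hk, h_odd, zero_add] at h_initial
    exact ⟨h_odd, h_initial⟩
  · rintro ⟨h_odd, h_even⟩
    refine ⟨?_, h_odd⟩
    rintro ((_ | _) | ⟨i, l⟩)
    · rw [vertexSum_alternatingLabels_inl_false hk, h_odd, h_even, add_zero]
    · rw [vertexSum_alternatingLabels_inl_true hk, h_odd, h_even, sub_zero]
    · simp [vertexSum_parallelComp_inr, alternatingLabels, pow_succ]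

end Alternating

end ParallelComposition

section OneEvenPath

variable {ι : Type} [Fintype ι] [DecidableEq ι] {k : ι → ℕ} {i₀ : ι} {n : ℕ}

lemma isBalanced_alternatingLabels_iff_of_even_of_odd {R : Type*} [Ring R] (hk : ∀ i, 0 < k i)
    (h_odd : ∀ i, i ≠ i₀ → Odd (k i)) (h_even : Even (k i₀)) {y : ι → R} :
    (parallelComp k).IsBalanced (alternatingLabels k y) ↔
      ∑ i ∈ Finset.univ.erase i₀, y i = 0 ∧ y i₀ = 0 := by
  have h_even_iff (i : ι) : Even (k i) ↔ i = i₀ :=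
    ⟨fun h => by_contra fun hne => Nat.not_even_iff_odd.2 (h_odd i hne) h, fun h => h ▸ h_even⟩
  have h_odd_filter : Finset.univ.filter (fun i => Odd (k i)) = Finset.univ.erase i₀ := by
    ext i
    simp [← Nat.not_even_iff_odd, h_even_iff]
  rw [isBalanced_alternatingLabels_iff hk, h_odd_filter]
  simp [h_even_iff, Finset.sum_filter]

lemma residueWeight_add_alternatingLabels (i₀ : ι) (a : ((i : ι) × Fin (k i)) → ZMod n)
    (y : ι → ZMod n) :
    residueWeight (a + alternatingLabels k y) = pathWeight (fun j => a ⟨i₀, j⟩) (y i₀) +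
      ∑ i ∈ Finset.univ.erase i₀, pathWeight (fun j => a ⟨i, j⟩) (y i) := by
  rw [Finset.add_sum_erase _ (fun i => pathWeight (fun j => a ⟨i, j⟩) (y i)) (Finset.mem_univ i₀)]
  exact Fintype.sum_sigma _

variable [NeZero n]

lemma exists_isBalanced_residueWeight_add_le (hk : ∀ i, 0 < k i)
    (h_odd : ∀ i, i ≠ i₀ → Odd (k i)) (h_even : Even (k i₀))
    (h_card : (Finset.univ.erase i₀).Nontrivial) (a : ((i : ι) × Fin (k i)) → ZMod n) :
    ∃ z, (parallelComp k).IsBalanced z ∧ residueWeight (a + z) ≤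
      (∑ i ∈ Finset.univ.erase i₀, k i / 2 + k i₀) * (n - 1) + (n - 1) := by
  obtain ⟨y, hy_sum, hy_weight⟩ := exists_sum_eq_zero_sum_pathWeight_le h_card
    (fun i hi => h_odd i (Finset.ne_of_mem_erase hi)) fun i j => a ⟨i, j⟩
  let z := Function.update y i₀ 0
  have hz_zero : z i₀ = 0 := Function.update_self ..
  have hz (i : ι) (hi : i ∈ Finset.univ.erase i₀) : z i = y i :=
    Function.update_of_ne (Finset.ne_of_mem_erase hi) _ _
  refine ⟨alternatingLabels k z, ?_, ?_⟩
  · rw [isBalanced_alternatingLabels_iff_of_even_of_odd hk h_odd h_even, Finset.sum_congr rfl hz]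
    exact ⟨hy_sum, hz_zero⟩
  · calc residueWeight (a + alternatingLabels k z)
        = pathWeight (fun j => a ⟨i₀, j⟩) (z i₀) +
          ∑ i ∈ Finset.univ.erase i₀, pathWeight (fun j => a ⟨i, j⟩) (y i) := by
          rw [residueWeight_add_alternatingLabels i₀,
            Finset.sum_congr rfl fun i hi => by rw [hz i hi]]
      _ ≤ k i₀ * (n - 1) + (∑ i ∈ Finset.univ.erase i₀, k i / 2 + 1) * (n - 1) :=
          add_le_add (pathWeight_le _ _) hy_weight
      _ = (∑ i ∈ Finset.univ.erase i₀, k i / 2 + k i₀) * (n - 1) + (n - 1) := by ring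

/-- Residues of maximal weight on the even path `i₀`, where balanced labellings vanish, and of
weight `(k i / 2) (n - 1)` on each odd path, a weight that every nonzero twist increases. -/
def extremalResidues (k : ι → ℕ) (i₀ : ι) (n : ℕ) : ((i : ι) × Fin (k i)) → ZMod n :=
  fun e => if e.1 = i₀ ∨ Odd (e.2 : ℕ) then -1 else 0

lemma residueWeight_extremalResidues_add_alternatingLabels (h_odd : ∀ i, i ≠ i₀ → Odd (k i))
    {y : ι → ZMod n} (hy : y i₀ = 0) :
    residueWeight (extremalResidues k i₀ n + alternatingLabels k y) =
      (∑ i ∈ Finset.univ.erase i₀, k i / 2 + k i₀) * (n - 1) +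
        ∑ i ∈ Finset.univ.erase i₀, (y i).val := by
  have h_even_path : pathWeight (fun j => extremalResidues k i₀ n ⟨i₀, j⟩) (y i₀) =
      k i₀ * (n - 1) := by
    simp [pathWeight, residueWeight, extremalResidues, hy, val_neg_one_eq]
  have h_odd_path (i : ι) (hi : i ∈ Finset.univ.erase i₀) :
      pathWeight (fun j => extremalResidues k i₀ n ⟨i, j⟩) (y i) =
        k i / 2 * (n - 1) + (y i).val := by
    have hne := Finset.ne_of_mem_erase hi
    simpa [extremalResidues, hne] using pathWeight_ite_odd_of_odd (h_odd i hne) (y i)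
  rw [residueWeight_add_alternatingLabels i₀, h_even_path, Finset.sum_congr rfl h_odd_path,
    Finset.sum_add_distrib, ← Finset.sum_mul]
  ring

lemma exists_forall_isBalanced_le_residueWeight_add (hk : ∀ i, 0 < k i)
    (h_odd : ∀ i, i ≠ i₀ → Odd (k i)) (h_even : Even (k i₀))
    (h_card : (Finset.univ.erase i₀).Nonempty) :
    ∃ a : ((i : ι) × Fin (k i)) → ZMod n, ∀ z, (parallelComp k).IsBalanced z →
      (∑ i ∈ Finset.univ.erase i₀, k i / 2 + k i₀) * (n - 1) + (n - 1) ≤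
        residueWeight (a + z) := by
  obtain ⟨p, hp⟩ := h_card
  refine ⟨extremalResidues k i₀ n + alternatingLabels k (Pi.single p (-1)), fun z hz => ?_⟩
  obtain ⟨y, rfl⟩ : ∃ y, z = alternatingLabels k y := ⟨_, eq_alternatingLabels_of_isBalanced hk hz⟩
  obtain ⟨hy_sum, hy_zero⟩ := (isBalanced_alternatingLabels_iff_of_even_of_odd hk h_odd h_even).1 hz
  have h_sum : ∑ i ∈ Finset.univ.erase i₀, (Pi.single p (-1) + y : ι → ZMod n) i = -1 := by
    simp [Finset.sum_add_distrib, hy_sum, Finset.ne_of_mem_erase hp]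
  rw [add_assoc, ← alternatingLabels_add, residueWeight_extremalResidues_add_alternatingLabels h_odd
    (by simp [hy_zero, (Finset.ne_of_mem_erase hp).symm])]
  refine Nat.add_le_add_left ?_ _
  rw [← val_neg_one_eq]
  exact val_le_of_natCast_eq (by simpa using h_sum)

theorem reg_parallelComp_rest_odd_one_even_general (K : Type) [Field K] [Fintype K]
    (h_card : (Finset.univ.erase i₀).Nontrivial) (hk : ∀ i, 0 < k i)
    (h_odd : ∀ i, i ≠ i₀ → Odd (k i)) (h_even : Even (k i₀)) :
    (parallelComp k).reg K =
      ((∑ i ∈ Finset.univ.erase i₀, k i / 2) + k i₀) * (Fintype.card K - 2) := by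
  have : Nonempty ((i : ι) × Fin (k i)) := ⟨⟨i₀, ⟨0, hk i₀⟩⟩⟩
  have h_units : Nat.card Kˣ - 1 = Fintype.card K - 2 := by
    rw [Nat.card_units, Nat.card_eq_fintype_card, Nat.sub_sub]
  rw [← h_units]
  exact (parallelComp k).reg_eq_of_residueWeight_bounds K
    (exists_isBalanced_residueWeight_add_le hk h_odd h_even h_card)
    (exists_forall_isBalanced_le_residueWeight_add hk h_odd h_even h_card.nonempty)

end OneEvenPath

/-- **Table 2, case `l = r - 1 > 1`.**  Let `G` be the parallel composition of
`r ≥ 3` paths, all but the last of odd length and the last of even length.  Then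
`reg G = (⌊k 0/2⌋ + ... + ⌊k (r-2)/2⌋ + k (r-1))(q-2)`, where `q = |K|`. -/
theorem reg_parallelComp_rest_odd_one_even
    (K : Type) [Field K] [Fintype K] (m : ℕ) (hm : 2 ≤ m)
    (k : Fin (m + 1) → ℕ) (hk : ∀ i, 0 < k i)
    (ho : ∀ i, i ≠ Fin.last m → Odd (k i)) (he : Even (k (Fin.last m))) :
    (parallelComp k).reg K =
      ((∑ i ∈ Finset.univ.erase (Fin.last m), k i / 2) + k (Fin.last m)) *
        (Fintype.card K - 2) := by
  have h_card : (Finset.univ.erase (Fin.last m)).Nontrivial :=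
    Finset.one_lt_card_iff_nontrivial.1 (by simpa using Nat.lt_of_succ_le hm)
  exact reg_parallelComp_rest_odd_one_even_general K h_card hk ho he
end
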